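/- Fix T > 0 and n ≥ 1, and let A : [0,T] → (n×n real symmetric matrices) be twice differentiable with A''_t ⪰ (A'_t)² in the Loewner order for all t ∈ [0,T]. Then the function [0,T] ∋ t ↦ e^{−tr(A_t)/n} is concave on [0,T]. -/

import Mathlib

open Matrix Set

/-!
Since `A'` inherits the symmetry of `A`, Cauchy–Schwarz for the trace and the Loewner bound give
`(tr A' / n)² ≤ tr (A'²) / n ≤ tr A'' / n`. So `g = tr A / n` satisfies `g'² ≤ g''`, which is
exactly the condition `(e^{-g})'' = e^{-g} (g'² - g'') ≤ 0`.
-/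

open RCLike (re)
open scoped ComplexOrder

theorem concaveOn_exp_neg_of_sq_deriv_le {D : Set ℝ} (hD : Convex ℝ D) {g g' g'' : ℝ → ℝ}
    (hg : ContinuousOn g D)
    (hg' : ∀ t ∈ interior D, HasDerivWithinAt g (g' t) (interior D) t)
    (hg'' : ∀ t ∈ interior D, HasDerivWithinAt g' (g'' t) (interior D) t)
    (hle : ∀ t ∈ interior D, g' t ^ 2 ≤ g'' t) :
    ConcaveOn ℝ D fun t => Real.exp (-g t) := by
  have hexp : ∀ t ∈ interior D, HasDerivWithinAt (fun s => Real.exp (-g s))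
      (Real.exp (-g t) * -g' t) (interior D) t := fun t ht => (hg' t ht).fun_neg.exp
  refine concaveOn_of_hasDerivWithinAt2_nonpos hD hg.neg.rexp hexp
    (fun t ht => (hexp t ht).fun_mul (hg'' t ht).fun_neg) fun t ht => ?_
  calc Real.exp (-g t) * -g' t * -g' t + Real.exp (-g t) * -g'' t
      = Real.exp (-g t) * (g' t ^ 2 - g'' t) := by ring
    _ ≤ 0 := mul_nonpos_of_nonneg_of_nonpos (Real.exp_nonneg _) (sub_nonpos.2 (hle t ht))

section Trace

variable {𝕜 ι : Type*} [RCLike 𝕜] [Fintype ι]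

theorem re_trace_conjTranspose_mul_self {κ : Type*} [Fintype κ] (M : Matrix κ ι 𝕜) :
    re (Mᴴ * M).trace = ∑ j, ∑ i, ‖M i j‖ ^ 2 := by
  simp only [trace, diag, mul_apply, conjTranspose_apply, RCLike.star_def, RCLike.conj_mul, map_sum,
    ← RCLike.ofReal_pow, RCLike.ofReal_re]

theorem sq_norm_trace_le_card_mul_re_trace_conjTranspose_mul_self (M : Matrix ι ι 𝕜) :
    ‖M.trace‖ ^ 2 ≤ Fintype.card ι * re (Mᴴ * M).trace := by
  calc ‖M.trace‖ ^ 2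
      ≤ (∑ i, ‖M i i‖) ^ 2 := by
        gcongr
        exact norm_sum_le _ _
    _ ≤ Fintype.card ι * ∑ i, ‖M i i‖ ^ 2 := sq_sum_le_card_mul_sum_sq
    _ ≤ Fintype.card ι * ∑ j, ∑ i, ‖M i j‖ ^ 2 := by
        gcongr with i
        exact Finset.single_le_sum (f := fun j => ‖M j i‖ ^ 2) (fun _ _ => sq_nonneg _)
          (Finset.mem_univ i)
    _ = Fintype.card ι * re (Mᴴ * M).trace := by rw [re_trace_conjTranspose_mul_self]

theorem sq_re_trace_le_card_mul_re_trace [DecidableEq ι] {M N : Matrix ι ι 𝕜}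
    (hM : M.IsHermitian) (hMN : (N - M ^ 2).PosSemidef) :
    re M.trace ^ 2 ≤ Fintype.card ι * re N.trace := by
  have loewner : re (M ^ 2).trace ≤ re N.trace := by
    simpa only [trace_sub, map_sub, sub_nonneg] using (RCLike.nonneg_iff.1 hMN.trace_nonneg).1
  calc re M.trace ^ 2
      ≤ ‖M.trace‖ ^ 2 := sq_le_sq.2 <| by
        simpa only [abs_norm] using RCLike.abs_re_le_norm M.trace
    _ ≤ Fintype.card ι * re (M ^ 2).trace := by
        simpa only [hM.eq, ← sq] using
          sq_norm_trace_le_card_mul_re_trace_conjTranspose_mul_self M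
    _ ≤ Fintype.card ι * re N.trace := by gcongr

end Trace

section Derivative

variable {ι : Type*} {s : Set ℝ} {t : ℝ}

theorem hasDerivWithinAt_re_trace {𝕜 : Type*} [RCLike 𝕜] [Fintype ι]
    {A : ℝ → Matrix ι ι 𝕜} {A' : Matrix ι ι 𝕜}
    (hA : ∀ i, HasDerivWithinAt (fun u => A u i i) (A' i i) s t) :
    HasDerivWithinAt (fun u => re (A u).trace) (re A'.trace) s t :=
  (RCLike.reCLM (K := 𝕜)).hasFDerivAt.comp_hasDerivWithinAt t
    (HasDerivWithinAt.fun_sum fun i _ => hA i)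

theorem isHermitian_of_hasDerivWithinAt {F : Type*} [NormedAddCommGroup F] [NormedSpace ℝ F]
    [StarAddMonoid F] [StarModule ℝ F] [ContinuousStar F]
    {A : ℝ → Matrix ι ι F} {A' : Matrix ι ι F} (hs : UniqueDiffWithinAt ℝ s t) (ht : t ∈ s)
    (hherm : ∀ u ∈ s, (A u).IsHermitian)
    (hA : ∀ i j, HasDerivWithinAt (fun u => A u i j) (A' i j) s t) :
    A'.IsHermitian := by
  refine IsHermitian.ext fun i j => ?_
  have hstar : HasDerivWithinAt (fun u => A u i j) (star (A' j i)) s t :=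
    (hA j i).star.congr_of_mem (fun u hu => ((hherm u hu).apply i j).symm) ht
  exact hs.eq_deriv _ hstar (hA i j)

end Derivative

theorem stmt_18_general {𝕜 ι : Type*} [RCLike 𝕜] [Fintype ι] [DecidableEq ι] [Nonempty ι]
    {D : Set ℝ} (hD : Convex ℝ D) {A A' A'' : ℝ → Matrix ι ι 𝕜} (hA : ContinuousOn A D)
    (hherm : ∀ t ∈ interior D, (A t).IsHermitian)
    (hA' : ∀ t ∈ interior D, ∀ i j,
      HasDerivWithinAt (fun s => A s i j) (A' t i j) (interior D) t)
    (hA'' : ∀ t ∈ interior D, ∀ i j,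
      HasDerivWithinAt (fun s => A' s i j) (A'' t i j) (interior D) t)
    (hLoewner : ∀ t ∈ interior D, (A'' t - A' t ^ 2).PosSemidef) :
    ConcaveOn ℝ D fun t => Real.exp (-(re (A t).trace / Fintype.card ι)) := by
  have hherm' : ∀ t ∈ interior D, (A' t).IsHermitian := fun t ht =>
    isHermitian_of_hasDerivWithinAt (isOpen_interior.uniqueDiffWithinAt ht) ht hherm (hA' t ht)
  have htrace : Continuous fun M : Matrix ι ι 𝕜 => re M.trace :=
    RCLike.continuous_re.comp continuous_id.matrix_trace
  have card_pos : (0 : ℝ) < Fintype.card ι := Nat.cast_pos.2 Fintype.card_pos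
  refine concaveOn_exp_neg_of_sq_deriv_le hD ((htrace.comp_continuousOn hA).div_const _)
    (fun t ht => (hasDerivWithinAt_re_trace fun i => hA' t ht i i).div_const _)
    (fun t ht => (hasDerivWithinAt_re_trace fun i => hA'' t ht i i).div_const _)
    fun t ht => ?_
  calc (re (A' t).trace / Fintype.card ι) ^ 2
      = re (A' t).trace ^ 2 / Fintype.card ι / Fintype.card ι := by ring
    _ ≤ re (A'' t).trace / Fintype.card ι := by
        gcongr
        exact (div_le_iff₀' card_pos).2
          (sq_re_trace_le_card_mul_re_trace (hherm' t ht) (hLoewner t ht))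

/-- If `A : [0,T] → Symₙ(ℝ)` (with `n ≥ 1`) is twice differentiable with
`A''_t ⪰ (A'_t)²` (Loewner order) for all `t ∈ [0,T]`, then `t ↦ exp (-tr (A_t) / n)` is
concave on `[0,T]`. -/
theorem stmt_18 {n : ℕ} (hn : 1 ≤ n) {T : ℝ} (hT : 0 < T)
    (A A' A'' : ℝ → Matrix (Fin n) (Fin n) ℝ)
    (hsymm : ∀ t ∈ Icc (0 : ℝ) T, (A t).IsSymm)
    (hA' : ∀ t ∈ Icc (0 : ℝ) T, ∀ i j,
      HasDerivWithinAt (fun s => A s i j) (A' t i j) (Icc (0 : ℝ) T) t)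
    (hA'' : ∀ t ∈ Icc (0 : ℝ) T, ∀ i j,
      HasDerivWithinAt (fun s => A' s i j) (A'' t i j) (Icc (0 : ℝ) T) t)
    (hLoewner : ∀ t ∈ Icc (0 : ℝ) T, (A'' t - (A' t) ^ 2).PosSemidef) :
    ConcaveOn ℝ (Icc (0 : ℝ) T) (fun t => Real.exp (-(A t).trace / n)) := by
  have : Nonempty (Fin n) := ⟨⟨0, hn⟩⟩
  have hA : ContinuousOn A (Icc 0 T) := fun t ht =>
    continuousWithinAt_pi.2 fun i => continuousWithinAt_pi.2 fun j =>
      (hA' t ht i j).continuousWithinAt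
  simpa only [RCLike.re_to_real, Fintype.card_fin, neg_div] using
    stmt_18_general (convex_Icc 0 T) hA
      (fun t ht => (conjTranspose_eq_transpose_of_trivial _).trans (hsymm t (interior_subset ht)))
      (fun t ht i j => (hA' t (interior_subset ht) i j).mono interior_subset)
      (fun t ht i j => (hA'' t (interior_subset ht) i j).mono interior_subset)
      fun t ht => hLoewner t (interior_subset ht)
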